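/- Let J ⊆ I and w a morphism in the Weyl groupoid of a Cartan scheme with finite root system. Then there exist unique u ∈ W^J(C) and v ∈ W_J(C) with w = uv, and moreover ℓ(w) = ℓ(u) + ℓ(v). Consequently every left coset w W_J(C) has a unique representative of minimal length, and the system of such representatives is W^J(C). -/

import Mathlib

/-!
The proof rests on the equality `ℓ(w) = N(w)`, where `N(w)` is the number of positive roots that
`w` makes negative (`len_eq_invNum`). Since `σ_i` permutes the positive roots other than `α_i`,
`N(w σ_i) = N(w) ± 1`, the sign being that of the root `w α_i`; the same holds for the number of
inversions supported in `J` when `i ∈ J`. Hence `N ≤ ℓ`, and equality follows once a morphism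
that makes no simple root negative is known to be an identity, objects included
(`eq_id_of_nonneg`).

That fact is obtained from Newman's lemma for the relation `x → x σ_i` if `x α_i` is negative. It
terminates because `N` drops. For local confluence, let `x α_i` and `x α_j` both be negative and
let `m` be the number of positive roots in the span of `α_i, α_j`. All of these are inversions, so
both alternating words in `σ_i, σ_j` of length `m` descend from `x` and leave no inversion in the
span. Their ends have the same source by (R4). They differ by a rank two morphism `g` of
determinant `1` for which `g` and its inverse preserve the positive cone; such a `g` permutes the
simple roots, fixes those other than `α_i, α_j`, and cannot swap `α_i` and `α_j`, so it is trivial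
(`rank_two_trivial`, `alt_eq_alt`). Thus each connected component of the relation has a single
terminal morphism, an identity.

For the decomposition, `u ∈ W^J` says that `u α_j` is positive for all `j ∈ J`. A descent of
`v ∈ W_J` at `j ∈ J` is then also a descent of `uv`, so `ℓ(uv) = ℓ(u) + ℓ(v)` by induction
(`len_comp_upper`). Consequently `W^J` is exactly the set of shortest coset representatives, and
two of them in one coset differ by an element of length zero.
-/

set_option linter.unusedSectionVars false

/-- A Cartan scheme `C = C(I, A, (ρ_i), (C^a))`. -/
structure CartanScheme (I A : Type) [Fintype I] [DecidableEq I] [Fintype A] [Nonempty A] where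
  ρ : I → A → A
  c : A → I → I → ℤ
  ρ_invol : ∀ i a, ρ i (ρ i a) = a
  c_diag : ∀ a i, c a i i = 2
  c_offdiag_nonpos : ∀ a i j, i ≠ j → c a i j ≤ 0
  c_zero_symm : ∀ a i j, c a i j = 0 → c a j i = 0
  c_rho : ∀ a i j, c (ρ i a) i j = c a i j

namespace CartanScheme

variable {I A : Type} [Fintype I] [DecidableEq I] [Fintype A] [Nonempty A] [DecidableEq A]
variable (C : CartanScheme I A)

/-- The simple reflection `σ_i^a` as a map `ℤ^I → ℤ^I`, `σ_i^a(α_j) = α_j - c^a_{ij} α_i`. -/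
def sigma (a : A) (i : I) : (I → ℤ) → (I → ℤ) :=
  fun v k => v k - (if k = i then ∑ j, C.c a i j * v j else 0)

/-- Target object of the word `[i_1, …, i_k]` read at source object `a`:
`ρ_{i_1} ⋯ ρ_{i_k}(a)`. -/
def wordTarget (a : A) : List I → A
  | [] => a
  | i :: l => C.ρ i (wordTarget a l)

/-- The map `σ_{i_1} ⋯ σ_{i_k}^a : ℤ^I → ℤ^I` determined by a word with source `a`. -/
def wordMap (a : A) : List I → ((I → ℤ) → (I → ℤ))
  | [] => id
  | i :: l => C.sigma (C.wordTarget a l) i ∘ wordMap a l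

theorem wordTarget_append (a : A) (l₁ l₂ : List I) :
    C.wordTarget a (l₁ ++ l₂) = C.wordTarget (C.wordTarget a l₂) l₁ := by
  induction l₁ with
  | nil => rfl
  | cons i l ih => simp [wordTarget, ih]

theorem wordMap_append (a : A) (l₁ l₂ : List I) :
    C.wordMap a (l₁ ++ l₂) = C.wordMap (C.wordTarget a l₂) l₁ ∘ C.wordMap a l₂ := by
  induction l₁ with
  | nil => rfl
  | cons i l ih => simp [wordMap, ih, wordTarget_append, Function.comp_assoc]

/-- A morphism of the Weyl groupoid `W(C)`: a source object, a target object, and a map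
`ℤ^I → ℤ^I` which is a composition of simple reflections along some word. -/
@[ext]
structure Mor where
  src : A
  tgt : A
  toFun : (I → ℤ) → (I → ℤ)
  spec : ∃ l : List I, C.wordTarget src l = tgt ∧ C.wordMap src l = toFun

variable {C}

/-- A word realizes a morphism. -/
def Realizes (w : Mor C) (l : List I) : Prop :=
  C.wordTarget w.src l = w.tgt ∧ C.wordMap w.src l = w.toFun

variable (C)

/-- The identity morphism `id^a`. -/
def idMor (a : A) : Mor C := ⟨a, a, id, ⟨[], rfl, rfl⟩⟩

/-- The generator `σ_i^a ∈ Hom(a, ρ_i(a))`. -/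
def genMor (i : I) (a : A) : Mor C :=
  ⟨a, C.ρ i a, C.sigma a i, ⟨[i], rfl, Function.comp_id _⟩⟩

/-- The simple reflection with target `a`, i.e. `id^a σ_i = σ_i^{ρ_i(a)} ∈ Hom(ρ_i(a), a)`. -/
def sgen (a : A) (i : I) : Mor C :=
  { src := C.ρ i a, tgt := a, toFun := C.sigma (C.ρ i a) i,
    spec := ⟨[i], by simp [wordTarget, C.ρ_invol], Function.comp_id _⟩ }

variable {C}

/-- Composition `u ∘ v` (with `v` applied first); junk value `u` if not composable. -/
def Mor.comp (u v : Mor C) : Mor C :=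
  if h : v.tgt = u.src then
    { src := v.src, tgt := u.tgt, toFun := u.toFun ∘ v.toFun,
      spec := by
        obtain ⟨lu, hu1, hu2⟩ := u.spec
        obtain ⟨lv, hv1, hv2⟩ := v.spec
        refine ⟨lu ++ lv, ?_, ?_⟩
        · rw [C.wordTarget_append, hv1, h, hu1]
        · rw [C.wordMap_append, hv1, h, hu2, hv2] }
  else u

/-- Length of a morphism: minimal length of a realizing word. -/
noncomputable def len (w : Mor C) : ℕ := sInf {k | ∃ l : List I, Realizes w l ∧ l.length = k}

/-- A reduced decomposition. -/
def IsReduced (w : Mor C) (l : List I) : Prop := Realizes w l ∧ l.length = len w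

/-- The (right) weak order: `u ≤_R uv` iff `ℓ(uv) = ℓ(u) + ℓ(v)`. -/
def weakLe (u w : Mor C) : Prop :=
  ∃ v : Mor C, v.tgt = u.src ∧ w = u.comp v ∧ len w = len u + len v

/-- Membership in the parabolic subgroupoid `W_J(C)`. -/
def InParabolic (J : Set I) (w : Mor C) : Prop :=
  ∃ l : List I, (∀ i ∈ l, i ∈ J) ∧ Realizes w l

/-- Length with respect to the generators `σ_j`, `j ∈ J`. -/
noncomputable def lenPar (J : Set I) (w : Mor C) : ℕ :=
  sInf {k | ∃ l : List I, (∀ i ∈ l, i ∈ J) ∧ Realizes w l ∧ l.length = k}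

/-- The set of letters occurring in some reduced decomposition of `w`;
by the theorem on reduced decompositions this is the set `J(w)`. -/
def Jset (w : Mor C) : Set I := {i | ∃ l : List I, IsReduced w l ∧ i ∈ l}

variable (C)

/-- The set of real roots at the object `a`. -/
def roots (a : A) : Set (I → ℤ) :=
  {α | ∃ (b : A) (l : List I) (j : I),
    C.wordTarget b l = a ∧ α = C.wordMap b l (Pi.single j 1)}

/-- The set of positive (real) roots at `a`. -/
def posRoots (a : A) : Set (I → ℤ) := {α ∈ C.roots a | ∀ i, 0 ≤ α i}

/-- `R^re(C)` is a finite root system of type `C`: axioms (R1), (R2), (R4) and finiteness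
((R3) holds automatically for real roots). -/
def IsFRS : Prop :=
  (∀ a : A, (C.roots a).Finite) ∧
  (∀ (a : A) (α : I → ℤ), α ∈ C.roots a → (∀ i, 0 ≤ α i) ∨ (∀ i, α i ≤ 0)) ∧
  (∀ (a : A) (i : I) (α : I → ℤ), α ∈ C.roots a → (∃ z : ℤ, α = z • Pi.single i 1) →
    α = Pi.single i 1 ∨ α = -Pi.single i 1) ∧
  (∀ (a : A) (i j : I), i ≠ j →
    (fun x => C.ρ i (C.ρ j x))^[(C.roots a ∩
      {α | ∃ m n : ℕ, α = (m : ℤ) • Pi.single i 1 + (n : ℤ) • Pi.single j 1}).ncard] a = a)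

variable {C}

/-- `I_L(w)`: the set of simple reflections with target `w.tgt` below `w` in weak order. -/
def IL (w : Mor C) : Set I := {i | weakLe (sgen C w.tgt i) w}

/-- `m` is the longest element of `Hom(-,a) ∩ W_J(C)`, i.e. `w_J` at the object `a`. -/
def IsLongestPar (a : A) (J : Set I) (m : Mor C) : Prop :=
  m.tgt = a ∧ InParabolic J m ∧
    ∀ x : Mor C, x.tgt = a → InParabolic J x → weakLe x m

/-- `m` is the longest element `w_I` of `Hom(-,a)`. -/
def IsLongestAt (a : A) (m : Mor C) : Prop :=
  m.tgt = a ∧ ∀ x : Mor C, x.tgt = a → weakLe x m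

/-- `z` is the meet of `x` and `y` in `(Hom(-,a), ≤_R)`. -/
def IsMeet (a : A) (x y z : Mor C) : Prop :=
  z.tgt = a ∧ weakLe z x ∧ weakLe z y ∧
    ∀ t : Mor C, t.tgt = a → weakLe t x → weakLe t y → weakLe t z

/-- `z` is the join of `x` and `y` in `(Hom(-,a), ≤_R)`. -/
def IsJoin (a : A) (x y z : Mor C) : Prop :=
  z.tgt = a ∧ weakLe x z ∧ weakLe y z ∧
    ∀ t : Mor C, t.tgt = a → weakLe x t → weakLe y t → weakLe z t

/-- The left coset `u W_J(C) ⊆ Hom(-, u.tgt)`. -/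
def leftCoset (u : Mor C) (J : Set I) : Set (Mor C) :=
  {x | ∃ v : Mor C, InParabolic J v ∧ v.tgt = u.src ∧ x = u.comp v}

end CartanScheme

variable {I A : Type} [Fintype I] [DecidableEq I] [Fintype A] [Nonempty A] [DecidableEq A]

open CartanScheme


/-- Membership in `W^J(C) = {w | ℓ(wσ_j) = ℓ(w) + 1 for all j ∈ J}`. -/
def InUpperJ (C : CartanScheme I A) (J : Set I) (u : Mor C) : Prop :=
  ∀ j ∈ J, len (u.comp (sgen C u.src j)) = len u + 1

namespace CartanScheme

variable {C : CartanScheme I A}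

/-! ### Composition, right multiplication by a simple reflection, inverses -/

theorem comp_src {u v : Mor C} (h : v.tgt = u.src) : (u.comp v).src = v.src := by
  simp [Mor.comp, h]

theorem comp_tgt {u v : Mor C} (h : v.tgt = u.src) : (u.comp v).tgt = u.tgt := by
  simp [Mor.comp, h]

theorem comp_toFun {u v : Mor C} (h : v.tgt = u.src) :
    (u.comp v).toFun = u.toFun ∘ v.toFun := by
  simp [Mor.comp, h]

theorem comp_assoc' {u v x : Mor C} (h : v.tgt = u.src) (h' : x.tgt = v.src) :
    (u.comp v).comp x = u.comp (v.comp x) := by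
  have h1 : x.tgt = (u.comp v).src := by rw [comp_src h, h']
  have h2 : (v.comp x).tgt = u.src := by rw [comp_tgt h', h]
  ext1
  · rw [comp_src h1, comp_src h2, comp_src h']
  · rw [comp_tgt h1, comp_tgt h2, comp_tgt h]
  · rw [comp_toFun h1, comp_toFun h2, comp_toFun h, comp_toFun h', Function.comp_assoc]

theorem comp_id' {u : Mor C} : u.comp (idMor C u.src) = u := by
  have h : (idMor C u.src).tgt = u.src := rfl
  ext1
  · rw [comp_src h]; rfl
  · rw [comp_tgt h]
  · rw [comp_toFun h]; rfl

/-- Right multiplication `w ↦ w σ_i` by the simple reflection composable with `w`. -/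
def st (w : Mor C) (i : I) : Mor C := w.comp (sgen C w.src i)

theorem st_src (w : Mor C) (i : I) : (st w i).src = C.ρ i w.src := comp_src rfl

theorem st_tgt (w : Mor C) (i : I) : (st w i).tgt = w.tgt := comp_tgt rfl

theorem st_toFun (w : Mor C) (i : I) :
    (st w i).toFun = w.toFun ∘ C.sigma (C.ρ i w.src) i := comp_toFun rfl

theorem sigma_apply_single (a : A) (i : I) :
    C.sigma a i (Pi.single i 1) = -Pi.single i 1 := by
  funext k
  by_cases h : k = i
  · subst h
    simp [sigma, Pi.single_apply, C.c_diag]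
  · simp [sigma, h]

theorem sigma_apply_ne (a : A) {i k : I} (h : k ≠ i) (v : I → ℤ) : C.sigma a i v k = v k := by
  simp [sigma, h]

/-- `σ_i^a` as a linear map. -/
def sigmaLin (C : CartanScheme I A) (a : A) (i : I) : (I → ℤ) →ₗ[ℤ] (I → ℤ) where
  toFun := C.sigma a i
  map_add' v w := by
    funext k
    by_cases h : k = i
    · simp [sigma, h, mul_add, Finset.sum_add_distrib]; ring
    · simp [sigma, h]
  map_smul' r v := by
    funext k
    by_cases h : k = i
    · simp [sigma, h, mul_sub, Finset.mul_sum, mul_left_comm]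
    · simp [sigma, h]

theorem sigma_eq (a : A) (i : I) (v : I → ℤ) :
    C.sigma a i v = v - (∑ j, C.c a i j * v j) • Pi.single i 1 := by
  funext k
  by_cases h : k = i
  · subst h; simp [sigma]
  · simp [sigma, h]

theorem sigma_sigma (a : A) (i : I) (v : I → ℤ) :
    C.sigma (C.ρ i a) i (C.sigma a i v) = v := by
  have h : C.sigma (C.ρ i a) i = C.sigma a i := by
    funext v k; simp [sigma, C.c_rho]
  rw [h]
  change sigmaLin C a i (C.sigma a i v) = v
  rw [sigma_eq a i v, map_sub, map_smul]
  change C.sigma a i v - _ • C.sigma a i _ = v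
  rw [sigma_apply_single, sigma_eq a i v]
  simp

theorem st_st (w : Mor C) (i : I) : st (st w i) i = w := by
  ext1
  · rw [st_src, st_src, C.ρ_invol]
  · rw [st_tgt, st_tgt]
  · rw [st_toFun, st_toFun, st_src, C.ρ_invol]
    funext v
    have := sigma_sigma (C := C) w.src i v
    simp [this]

/-- Induction on `W_J(C)` along right multiplication by the generators `σ_j`, `j ∈ J`. -/
theorem par_induction {J : Set I} {P : Mor C → Prop} (h0 : ∀ a, P (idMor C a))
    (h1 : ∀ w j, InParabolic J w → P w → j ∈ J → P (st w j)) (w : Mor C)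
    (hw : InParabolic J w) : P w := by
  obtain ⟨l, hl, hr⟩ := hw
  induction l using List.reverseRecOn generalizing w with
  | nil =>
    have : w = idMor C w.src := by
      ext1
      · rfl
      · exact hr.1.symm
      · exact hr.2.symm
    rw [this]; exact h0 _
  | append_singleton l i ih =>
    have hl' : ∀ i ∈ l, i ∈ J := fun k hk => hl k (by simp [hk])
    let w' : Mor C := ⟨C.ρ i w.src, C.wordTarget (C.ρ i w.src) l, C.wordMap (C.ρ i w.src) l,
      ⟨l, rfl, rfl⟩⟩
    have hw' : Realizes w' l := ⟨rfl, rfl⟩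
    have : w = st w' i := by
      ext1
      · rw [st_src, C.ρ_invol]
      · rw [st_tgt, ← hr.1, C.wordTarget_append]; rfl
      · rw [st_toFun, ← hr.2, C.wordMap_append]
        simp only [w', C.ρ_invol]; rfl
    rw [this]
    exact h1 _ _ ⟨l, hl', hw'⟩ (ih w' hl' hw') (hl i (by simp))

theorem par_univ (w : Mor C) : InParabolic Set.univ w := by
  obtain ⟨l, h⟩ := w.spec
  exact ⟨l, fun _ _ => trivial, h⟩

theorem mor_induction {P : Mor C → Prop} (h0 : ∀ a, P (idMor C a))
    (h1 : ∀ w j, P w → P (st w j)) (w : Mor C) : P w :=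
  par_induction (J := Set.univ) h0 (fun w j _ h _ => h1 w j h) w (par_univ w)

theorem par_id (J : Set I) (a : A) : InParabolic J (idMor C a) :=
  ⟨[], by simp, rfl, rfl⟩

theorem par_comp {J : Set I} {u v : Mor C} (hu : InParabolic J u) (hv : InParabolic J v)
    (h : v.tgt = u.src) : InParabolic J (u.comp v) := by
  obtain ⟨l, hl, h1, h2⟩ := hu
  obtain ⟨l', hl', h1', h2'⟩ := hv
  refine ⟨l ++ l', fun i hi => ?_, ?_, ?_⟩
  · rcases List.mem_append.1 hi with hi | hi
    · exact hl i hi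
    · exact hl' i hi
  · rw [comp_src h, comp_tgt h, C.wordTarget_append, h1', h, h1]
  · rw [comp_src h, comp_toFun h, C.wordMap_append, h1', h, h2, h2']

theorem par_sgen {J : Set I} (a : A) {j : I} (hj : j ∈ J) : InParabolic J (sgen C a j) :=
  ⟨[j], by simpa using hj, by simp [wordTarget, sgen, C.ρ_invol], Function.comp_id _⟩

theorem par_st {J : Set I} {w : Mor C} (hw : InParabolic J w) {j : I} (hj : j ∈ J) :
    InParabolic J (st w j) := par_comp hw (par_sgen _ hj) rfl

theorem wordTarget_reverse (a : A) (l : List I) :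
    C.wordTarget (C.wordTarget a l) l.reverse = a := by
  induction l generalizing a with
  | nil => rfl
  | cons i l ih => simp [wordTarget, wordTarget_append, C.ρ_invol, ih]

theorem wordMap_reverse (a : A) (l : List I) (v : I → ℤ) :
    C.wordMap (C.wordTarget a l) l.reverse (C.wordMap a l v) = v := by
  induction l generalizing a with
  | nil => rfl
  | cons i l ih =>
    simp [wordTarget, wordMap, wordMap_append, C.ρ_invol, sigma_sigma, ih]

theorem exists_inv {J : Set I} {w : Mor C} (hw : InParabolic J w) :
    ∃ w' : Mor C, InParabolic J w' ∧ w'.src = w.tgt ∧ w'.tgt = w.src ∧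
      (∀ v, w'.toFun (w.toFun v) = v) ∧ ∀ v, w.toFun (w'.toFun v) = v := by
  obtain ⟨l, hl, h1, h2⟩ := hw
  refine ⟨⟨w.tgt, w.src, C.wordMap w.tgt l.reverse, ⟨l.reverse, ?_, rfl⟩⟩,
    ⟨l.reverse, by simpa using hl, ?_, rfl⟩, rfl, rfl, ?_, ?_⟩
  · rw [← h1, wordTarget_reverse]
  · change C.wordTarget w.tgt l.reverse = w.src
    rw [← h1, wordTarget_reverse]
  · intro v
    change C.wordMap w.tgt l.reverse (w.toFun v) = v
    rw [← h1, ← h2, wordMap_reverse]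
  · intro v
    change w.toFun (C.wordMap w.tgt l.reverse v) = v
    have := wordMap_reverse (C := C) w.tgt l.reverse v
    rwa [← h1, wordTarget_reverse, List.reverse_reverse, h1, h2] at this

/-! ### Left cosets -/

theorem coset_refl (u : Mor C) (J : Set I) : u ∈ leftCoset u J :=
  ⟨idMor C u.src, par_id _ _, rfl, comp_id'.symm⟩

theorem coset_tgt {u x : Mor C} {J : Set I} (h : x ∈ leftCoset u J) : x.tgt = u.tgt := by
  obtain ⟨v, _, ht, rfl⟩ := h
  exact comp_tgt ht

theorem coset_trans {u x y : Mor C} {J : Set I} (h : x ∈ leftCoset u J)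
    (h' : y ∈ leftCoset x J) : y ∈ leftCoset u J := by
  obtain ⟨v, hv, ht, rfl⟩ := h
  obtain ⟨v', hv', ht', rfl⟩ := h'
  rw [comp_src ht] at ht'
  exact ⟨v.comp v', par_comp hv hv' ht', by rw [comp_tgt ht', ht], comp_assoc' ht ht'⟩

theorem coset_symm {u x : Mor C} {J : Set I} (h : x ∈ leftCoset u J) : u ∈ leftCoset x J := by
  obtain ⟨v, hv, ht, rfl⟩ := h
  obtain ⟨v', hv', hs', ht', _, h2⟩ := exists_inv hv
  have h3 : v'.tgt = (u.comp v).src := by rw [comp_src ht, ht']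
  refine ⟨v', hv', h3, ?_⟩
  ext1
  · rw [comp_src h3, hs', ht]
  · rw [comp_tgt h3, comp_tgt ht]
  · rw [comp_toFun h3, comp_toFun ht]
    funext x
    simp [h2]

theorem coset_st (u : Mor C) {J : Set I} {j : I} (hj : j ∈ J) : st u j ∈ leftCoset u J :=
  ⟨_, par_sgen _ hj, rfl, rfl⟩

/-! ### Linearity and determinants -/

theorem exists_lin (w : Mor C) :
    ∃ f : (I → ℤ) →ₗ[ℤ] (I → ℤ), ∀ v, f v = w.toFun v := by
  induction w using mor_induction with
  | h0 a => exact ⟨LinearMap.id, fun _ => rfl⟩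
  | h1 w j ih =>
    obtain ⟨f, hf⟩ := ih
    refine ⟨f ∘ₗ sigmaLin C (C.ρ j w.src) j, fun v => ?_⟩
    rw [st_toFun]
    exact hf _

/-- The linear map underlying a morphism of the Weyl groupoid. -/
noncomputable def lin (w : Mor C) : (I → ℤ) →ₗ[ℤ] (I → ℤ) := (exists_lin w).choose

theorem lin_apply (w : Mor C) (v : I → ℤ) : lin w v = w.toFun v := (exists_lin w).choose_spec v

theorem lin_id (a : A) (v : I → ℤ) : lin (idMor C a) v = v := lin_apply _ _

theorem lin_comp {u v : Mor C} (h : v.tgt = u.src) (x : I → ℤ) :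
    lin (u.comp v) x = lin u (lin v x) := by
  simp only [lin_apply, comp_toFun h, Function.comp]

theorem lin_st (w : Mor C) (i : I) (x : I → ℤ) :
    lin (st w i) x = lin w (C.sigma (C.ρ i w.src) i x) := by
  simp only [lin_apply, st_toFun, Function.comp]

theorem lin_st_single (w : Mor C) (i : I) :
    lin (st w i) (Pi.single i 1) = -lin w (Pi.single i 1) := by
  rw [lin_st, sigma_apply_single, map_neg]

theorem det_sigmaLin (a : A) (i : I) : LinearMap.det (sigmaLin C a i) = -1 := by
  rw [← LinearMap.det_toMatrix']
  have : LinearMap.toMatrix' (sigmaLin C a i) =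
      1 - Matrix.replicateCol Unit (Pi.single i 1 : I → ℤ) * Matrix.replicateRow Unit (C.c a i) := by
    ext k j
    rw [LinearMap.toMatrix'_apply]
    change C.sigma a i _ k = _
    simp [sigma_eq, Matrix.mul_apply, Matrix.one_apply, Pi.single_apply]
  rw [this, Matrix.det_one_sub_mul_comm]
  simp [Matrix.mul_apply, Pi.single_apply, C.c_diag]

theorem det_st (w : Mor C) (i : I) :
    LinearMap.det (lin (st w i)) = -LinearMap.det (lin w) := by
  have : lin (st w i) = lin w ∘ₗ sigmaLin C (C.ρ i w.src) i :=
    LinearMap.ext fun x => lin_st w i x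
  rw [this, LinearMap.det_comp, det_sigmaLin]; ring

/-- A morphism of `W_J(C)` changes a vector only in the coordinates from `J`. -/
theorem par_coord {J : Set I} {w : Mor C} (hw : InParabolic J w) (v : I → ℤ) {k : I}
    (hk : k ∉ J) : lin w v k = v k := by
  revert v
  refine par_induction (P := fun w => ∀ v, lin w v k = v k) (fun a v => by rw [lin_id]) ?_ w hw
  intro w j _ ih hj v
  rw [lin_st, ih, sigma_apply_ne]
  rintro rfl; exact hk hj

/-! ### Roots and inversion sets -/

theorem single_mem_roots (a : A) (i : I) : (Pi.single i 1 : I → ℤ) ∈ C.roots a :=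
  ⟨a, [], i, rfl, rfl⟩

theorem single_nonneg (i : I) : (0 : I → ℤ) ≤ Pi.single i 1 := by
  rw [Pi.single_nonneg]; exact zero_le_one

theorem sigma_mem_roots {a : A} (i : I) {α : I → ℤ} (h : α ∈ C.roots a) :
    C.sigma a i α ∈ C.roots (C.ρ i a) := by
  obtain ⟨b, l, j, rfl, rfl⟩ := h
  exact ⟨b, i :: l, j, rfl, rfl⟩

theorem lin_mem_roots (w : Mor C) {α : I → ℤ} (h : α ∈ C.roots w.src) :
    lin w α ∈ C.roots w.tgt := by
  obtain ⟨b, l, j, hb, rfl⟩ := h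
  obtain ⟨l', h1, h2⟩ := w.spec
  refine ⟨b, l' ++ l, j, ?_, ?_⟩
  · rw [C.wordTarget_append, hb, h1]
  · rw [C.wordMap_append, hb, lin_apply, ← h2]; rfl

theorem lin_injective (w : Mor C) {v : I → ℤ} (h : lin w v = 0) : v = 0 := by
  obtain ⟨w', _, _, _, h1, _⟩ := exists_inv (par_univ w)
  have := h1 v
  rw [← lin_apply w, h, ← lin_apply, map_zero] at this
  exact this.symm

theorem root_ne_zero {a : A} {α : I → ℤ} (h : α ∈ C.roots a) : α ≠ 0 := by
  obtain ⟨b, l, j, hb, rfl⟩ := h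
  intro h0
  have h1 := lin_injective (C := C) ⟨b, a, C.wordMap b l, ⟨l, hb, rfl⟩⟩
    (v := Pi.single j 1) (by rw [lin_apply]; exact h0)
  simpa using congrFun h1 j

theorem root_sign (hC : C.IsFRS) {a : A} {α : I → ℤ} (h : α ∈ C.roots a) : 0 ≤ α ∨ α ≤ 0 :=
  hC.2.1 a α h

theorem root_not_both {a : A} {α : I → ℤ} (h : α ∈ C.roots a) (h1 : 0 ≤ α) (h2 : α ≤ 0) :
    False := root_ne_zero h (le_antisymm h2 h1)

/-- The only positive root made negative by `σ_i` is `α_i`. -/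
theorem sigma_pos (hC : C.IsFRS) {a : A} (i : I) {α : I → ℤ} (h : α ∈ C.roots a) (h0 : 0 ≤ α)
    (hne : α ≠ Pi.single i 1) : 0 ≤ C.sigma a i α := by
  -- `α` has a positive coordinate `k ≠ i`, which `σ_i` does not change
  have hk : ∃ k, k ≠ i ∧ α k ≠ 0 := by
    by_contra! hcon
    have hα : α = α i • Pi.single i 1 := by
      funext k
      by_cases hki : k = i
      · subst hki; simp
      · simp [hki, hcon k hki]
    rcases hC.2.2.1 a i α h ⟨α i, hα⟩ with h1 | h1
    · exact hne h1
    · have := h0 i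
      rw [h1] at this
      simp at this
  obtain ⟨k, hki, hk0⟩ := hk
  refine (root_sign hC (sigma_mem_roots i h)).resolve_right fun hneg => ?_
  have h1 := hneg k
  rw [sigma_apply_ne a hki] at h1
  exact hk0 (le_antisymm h1 (h0 k))

/-- The positive roots supported in `J` that `w` maps to negative roots. -/
def invSet (J : Set I) (w : Mor C) : Set (I → ℤ) :=
  {α | α ∈ C.roots w.src ∧ 0 ≤ α ∧ (∀ k ∉ J, α k = 0) ∧ lin w α ≤ 0}

/-- The number of inversions of `w` supported in `J`. -/
noncomputable def invNum (J : Set I) (w : Mor C) : ℕ := (invSet J w).ncard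

theorem invSet_finite (hC : C.IsFRS) (J : Set I) (w : Mor C) : (invSet J w).Finite :=
  (hC.1 w.src).subset fun _ h => h.1

theorem single_supp {J : Set I} {i : I} (hi : i ∈ J) :
    ∀ k ∉ J, (Pi.single i 1 : I → ℤ) k = 0 := by
  intro k hk
  have : k ≠ i := by rintro rfl; exact hk hi
  simp [this]

/-- If `w α_i` is positive, the inversions of `w σ_i` are `α_i` and the images under `σ_i` of the
inversions of `w`. -/
theorem invSet_st (hC : C.IsFRS) {J : Set I} (w : Mor C) {i : I} (hi : i ∈ J)
    (h : 0 ≤ lin w (Pi.single i 1)) :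
    invSet J (st w i) = insert (Pi.single i 1) (C.sigma w.src i '' invSet J w) := by
  ext β
  constructor
  · rintro ⟨h1, h2, h3, h4⟩
    by_cases hβ : β = Pi.single i 1
    · exact Or.inl hβ
    · right
      rw [st_src] at h1
      have hs : C.sigma w.src i (C.sigma (C.ρ i w.src) i β) = β := by
        simpa [C.ρ_invol] using sigma_sigma (C := C) (C.ρ i w.src) i β
      refine ⟨C.sigma (C.ρ i w.src) i β, ⟨?_, sigma_pos hC i h1 h2 hβ, ?_, ?_⟩, hs⟩
      · simpa [C.ρ_invol] using sigma_mem_roots i h1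
      · intro k hk
        rw [sigma_apply_ne _ (by rintro rfl; exact hk hi), h3 k hk]
      · rwa [lin_st] at h4
  · rintro (rfl | ⟨α, ⟨h1, h2, h3, h4⟩, rfl⟩)
    · refine ⟨single_mem_roots _ i, single_nonneg i, single_supp hi, ?_⟩
      rw [lin_st_single]
      exact neg_nonpos.2 h
    · have hα : α ≠ Pi.single i 1 := by
        rintro rfl
        exact root_not_both (lin_mem_roots w h1) h h4
      refine ⟨?_, sigma_pos hC i h1 h2 hα, ?_, ?_⟩
      · rw [st_src]; exact sigma_mem_roots i h1
      · intro k hk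
        rw [sigma_apply_ne _ (by rintro rfl; exact hk hi), h3 k hk]
      · rw [lin_st, sigma_sigma]; exact h4

theorem invNum_st_pos (hC : C.IsFRS) {J : Set I} (w : Mor C) {i : I} (hi : i ∈ J)
    (h : 0 ≤ lin w (Pi.single i 1)) : invNum J (st w i) = invNum J w + 1 := by
  rw [invNum, invSet_st hC w hi h,
    Set.ncard_insert_of_notMem ?_ ((invSet_finite hC J w).image _),
    Set.ncard_image_of_injective]
  · rfl
  · intro x y hxy
    rw [← sigma_sigma w.src i x, hxy, sigma_sigma]
  · rintro ⟨α, hα, h1⟩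
    have h2 := sigma_sigma (C := C) w.src i α
    rw [h1, sigma_apply_single] at h2
    have h3 := hα.2.1 i
    rw [← h2] at h3
    simp at h3

theorem invNum_st_neg (hC : C.IsFRS) {J : Set I} (w : Mor C) {i : I} (hi : i ∈ J)
    (h : lin w (Pi.single i 1) ≤ 0) : invNum J (st w i) + 1 = invNum J w := by
  have := invNum_st_pos hC (J := J) (st w i) hi (by
    rw [lin_st_single]; exact neg_nonneg.2 h)
  rw [st_st] at this
  exact this.symm

theorem single_sign (hC : C.IsFRS) (w : Mor C) (i : I) :
    0 ≤ lin w (Pi.single i 1) ∨ lin w (Pi.single i 1) ≤ 0 :=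
  root_sign hC (lin_mem_roots w (single_mem_roots _ i))

theorem map_nonneg_of_single {J : Set I} {f : (I → ℤ) →ₗ[ℤ] (I → ℤ)}
    (h : ∀ i ∈ J, 0 ≤ f (Pi.single i 1)) {v : I → ℤ} (hv : 0 ≤ v) (hs : ∀ k ∉ J, v k = 0) :
    0 ≤ f v := by
  have hv' : v = ∑ i, v i • (Pi.single i 1 : I → ℤ) := by
    funext k
    simp [Pi.single_apply]
  rw [hv', map_sum]
  refine Finset.sum_nonneg fun i _ => ?_
  rw [map_smul]
  by_cases hi : i ∈ J
  · exact smul_nonneg (hv i) (h i hi)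
  · rw [hs i hi, zero_smul]

theorem invNum_eq_zero {J : Set I} {w : Mor C}
    (h : ∀ i ∈ J, 0 ≤ lin w (Pi.single i 1)) : invNum J w = 0 := by
  have : invSet J w = ∅ := by
    refine Set.eq_empty_of_forall_notMem fun α hα => ?_
    exact root_not_both (lin_mem_roots w hα.1) (map_nonneg_of_single h hα.2.1 hα.2.2.1) hα.2.2.2
  rw [invNum, this, Set.ncard_empty]

theorem nonneg_of_invNum_eq_zero (hC : C.IsFRS) {J : Set I} {w : Mor C} (h : invNum J w = 0)
    {i : I} (hi : i ∈ J) : 0 ≤ lin w (Pi.single i 1) := by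
  refine (single_sign hC w i).resolve_right fun hn => ?_
  have := invNum_st_neg hC w hi hn
  omega

/-- A morphism of `W_J(C)` makes no simple root outside `J` negative. -/
theorem par_nonneg (hC : C.IsFRS) {J : Set I} {w : Mor C} (hw : InParabolic J w) {k : I}
    (hk : k ∉ J) : 0 ≤ lin w (Pi.single k 1) := by
  refine (single_sign hC w k).resolve_right fun hn => ?_
  have := hn k
  rw [par_coord hw _ hk] at this
  simp at this

/-! ### Rank two -/

/-- The morphism `w σ_i σ_j σ_i ⋯` with `n` alternating factors. -/
def alt (w : Mor C) (i j : I) : ℕ → Mor C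
  | 0 => w
  | n + 1 => alt (st w i) j i n

theorem alt_tgt (w : Mor C) (i j : I) (n : ℕ) : (alt w i j n).tgt = w.tgt := by
  induction n generalizing w i j with
  | zero => rfl
  | succ n ih => rw [alt, ih, st_tgt]

theorem alt_coset (w : Mor C) {J : Set I} {i j : I} (hi : i ∈ J) (hj : j ∈ J) (n : ℕ) :
    alt w i j n ∈ leftCoset w J := by
  induction n generalizing w i j with
  | zero => exact coset_refl _ _
  | succ n ih => exact coset_trans (coset_st w hi) (ih _ hj hi)

theorem det_alt (w : Mor C) (i j : I) (n : ℕ) :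
    LinearMap.det (lin (alt w i j n)) = (-1) ^ n * LinearMap.det (lin w) := by
  induction n generalizing w i j with
  | zero => simp [alt]
  | succ n ih => rw [alt, ih, det_st]; ring

/-- If the source of `w'` is `(ρ_j ρ_i)^n` applied to that of `w`, then `w σ_i σ_j ⋯` and
`w' σ_j σ_i ⋯` with `n` factors each have the same source. -/
theorem alt_src (w w' : Mor C) (i j : I) (n : ℕ)
    (h : w'.src = (fun x => C.ρ j (C.ρ i x))^[n] w.src) :
    (alt w i j n).src = (alt w' j i n).src := by
  induction n generalizing w w' i j with
  | zero => exact h.symm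
  | succ n ih =>
    apply ih
    have hs : Function.Semiconj (C.ρ i) (fun x => C.ρ j (C.ρ i x))
        (fun x => C.ρ i (C.ρ j x)) := fun x => rfl
    rw [st_src, st_src, h, Function.iterate_succ_apply', ← (hs.iterate_right n) w.src]
    simp only [C.ρ_invol]

/-- One step down: `y = x σ_i` with `x(α_i)` negative. -/
def Desc (x y : Mor C) : Prop := ∃ i, lin x (Pi.single i 1) ≤ 0 ∧ y = st x i

open Relation in
/-- Alternating right multiplication by `σ_i` and `σ_j` descends until no inversion supported in
`{i, j}` is left. -/
theorem alt_desc (hC : C.IsFRS) {J : Set I} (n : ℕ) (w : Mor C) {i j : I} (hi : i ∈ J)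
    (hj : j ∈ J) (hJ : ∀ k ∈ J, k = i ∨ k = j) (hn : invNum J w = n)
    (h : 0 ≤ lin w (Pi.single j 1)) :
    ReflTransGen Desc w (alt w i j n) ∧ invNum J (alt w i j n) = 0 := by
  induction n generalizing w i j with
  | zero => exact ⟨.refl, hn⟩
  | succ n ih =>
    have hneg : lin w (Pi.single i 1) ≤ 0 := by
      refine (single_sign hC w i).resolve_left fun hp => ?_
      have := invNum_eq_zero (J := J) (w := w) (by
        intro k hk
        rcases hJ k hk with rfl | rfl
        exacts [hp, h])
      omega
    have h1 := invNum_st_neg hC w hi hneg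
    have h2 := ih (st w i) hj hi (fun k hk => (hJ k hk).symm) (by omega) (by
      rw [lin_st_single]; exact neg_nonneg.2 hneg)
    exact ⟨.head ⟨i, hneg, rfl⟩ h2.1, h2.2⟩

theorem one_le_sum {v : I → ℤ} (h0 : 0 ≤ v) (hne : v ≠ 0) : 1 ≤ ∑ k, v k := by
  have h1 : 0 ≤ ∑ k, v k := Finset.sum_nonneg fun k _ => h0 k
  have h2 : ∑ k, v k ≠ 0 := fun h =>
    hne (funext fun k => (Finset.sum_eq_zero_iff_of_nonneg fun k _ => h0 k).1 h k (by simp))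
  omega

theorem eq_single_of_sum {v : I → ℤ} (h0 : 0 ≤ v) (h1 : ∑ k, v k = 1) :
    ∃ l, v = Pi.single l 1 := by
  obtain ⟨l, hl⟩ : ∃ l, v l ≠ 0 := by
    by_contra! hcon
    simp [hcon] at h1
  refine ⟨l, ?_⟩
  have h2 : (0 : I → ℤ) ≤ v - Pi.single l 1 := by
    intro k
    have := h0 k
    by_cases hk : k = l
    · subst hk
      simp only [Pi.zero_apply, Pi.sub_apply, Pi.single_eq_same] at this ⊢
      omega
    · simpa [hk] using this
  by_contra hne
  have h3 := one_le_sum h2 (sub_ne_zero.2 hne)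
  simp [h1] at h3

/-- A morphism that makes no simple root negative does not decrease the height of a nonnegative
vector, since each simple root is sent to a nonzero nonnegative integral vector. -/
theorem sum_le_sum_lin (w : Mor C) (hw : ∀ k, 0 ≤ lin w (Pi.single k 1)) {v : I → ℤ}
    (hv : 0 ≤ v) : ∑ k, v k ≤ ∑ k, lin w v k := by
  have hv' : v = ∑ i, v i • (Pi.single i 1 : I → ℤ) := by
    funext k
    simp [Pi.single_apply]
  have h1 : ∑ k, lin w v k = ∑ i, v i * ∑ k, lin w (Pi.single i 1) k := by
    conv_lhs => rw [hv', map_sum]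
    simp only [map_smul, Finset.sum_apply, Pi.smul_apply, smul_eq_mul]
    rw [Finset.sum_comm]
    simp only [Finset.mul_sum]
  rw [h1]
  refine Finset.sum_le_sum fun i _ => le_mul_of_one_le_right (hv i) (one_le_sum (hw i) ?_)
  exact root_ne_zero (lin_mem_roots w (single_mem_roots _ i))

/-- A rank two morphism of determinant one that makes no simple root negative is linearly
trivial: it permutes the simple roots, and the determinant rules out that it swaps
`α_i` and `α_j`. -/
theorem rank_two_trivial (hC : C.IsFRS) {J : Set I} {i j : I} (hij : i ≠ j) (hi : i ∈ J)
    (hj : j ∈ J) (hJ : ∀ k ∈ J, k = i ∨ k = j) {g : Mor C} (hg : InParabolic J g)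
    (hpos : ∀ k ∈ J, 0 ≤ lin g (Pi.single k 1)) (hdet : LinearMap.det (lin g) = 1)
    (v : I → ℤ) : lin g v = v := by
  obtain ⟨g', hg', hs, ht, hgl, hgr⟩ := exists_inv hg
  simp only [← lin_apply] at hgl hgr
  have nn : ∀ k, 0 ≤ lin g (Pi.single k 1) := fun k => by
    by_cases hk : k ∈ J
    exacts [hpos k hk, par_nonneg hC hg hk]
  have nn' : ∀ k, 0 ≤ lin g' (Pi.single k 1) := fun k => by
    by_cases hk : k ∈ J
    · refine (single_sign hC g' k).resolve_right fun hn => ?_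
      have h1 : 0 ≤ lin g (-lin g' (Pi.single k 1)) :=
        map_nonneg_of_single hpos (neg_nonneg.2 hn) fun l hl => by
          rw [Pi.neg_apply, par_coord hg' _ hl, single_supp hk l hl, neg_zero]
      rw [map_neg, hgr] at h1
      have := h1 k
      simp at this
    · exact par_nonneg hC hg' hk
  -- heights grow weakly under both `g` and its inverse, so `g α_k` has height one
  have hperm : ∀ k, ∃ l, lin g (Pi.single k 1) = Pi.single l 1 := fun k => by
    refine eq_single_of_sum (nn k) (le_antisymm ?_ (one_le_sum (nn k) ?_))
    · have := sum_le_sum_lin g' nn' (nn k)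
      rw [hgl] at this
      simpa using this
    · exact root_ne_zero (lin_mem_roots g (single_mem_roots _ k))
  choose π hπ using hperm
  have hinj : Function.Injective π := fun k l h => by
    have h1 : (Pi.single k 1 : I → ℤ) = Pi.single l 1 := by
      rw [← hgl (Pi.single k 1), hπ, h, ← hπ, hgl]
    by_contra hne
    have := congrFun h1 k
    simp [hne] at this
  have hout : ∀ k ∉ J, π k = k := fun k hk => by
    have := par_coord hg (Pi.single k 1) hk
    rw [hπ] at this
    by_contra hne
    simp [Ne.symm hne] at this
  have hin : ∀ k ∈ J, π k ∈ J := fun k hk => by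
    by_contra hcon
    have h1 := hinj (hout _ hcon)
    rw [h1] at hcon
    exact hcon hk
  rcases hJ _ (hin i hi) with h | h
  · have h' : π j = j := (hJ _ (hin j hj)).resolve_left fun h' => hij (hinj (h.trans h'.symm))
    have hfix : ∀ k, π k = k := fun k => by
      by_cases hk : k ∈ J
      · rcases hJ k hk with rfl | rfl
        exacts [h, h']
      · exact hout k hk
    have : lin g = LinearMap.id := by
      refine LinearMap.pi_ext' fun k => LinearMap.ext_ring ?_
      simpa [hfix] using hπ k
    rw [this]; rfl
  · -- `π` is the transposition of `i` and `j`, of determinant `-1`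
    exfalso
    have h' : π j = i := (hJ _ (hin j hj)).resolve_right fun h' => hij (hinj (h.trans h'.symm))
    have hsw : ∀ k, π k = Equiv.swap i j k := fun k => by
      by_cases hk : k ∈ J
      · rcases hJ k hk with rfl | rfl
        · rw [h, Equiv.swap_apply_left]
        · rw [h', Equiv.swap_apply_right]
      · rw [hout k hk, Equiv.swap_apply_of_ne_of_ne] <;> rintro rfl <;> exact hk ‹_›
    have hm : LinearMap.toMatrix' (lin g) =
        (1 : Matrix I I ℤ).submatrix (Equiv.swap i j) id := by
      ext k l
      rw [LinearMap.toMatrix'_apply]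
      have e : (fun j' => if j' = l then (1 : ℤ) else 0) = Pi.single l 1 := by
        funext x; simp [Pi.single_apply]
      rw [hπ, hsw, Matrix.submatrix_apply, Matrix.one_apply, Pi.single_apply]
      simp [Equiv.swap_apply_eq_iff]
    rw [← LinearMap.det_toMatrix', hm, Matrix.det_permute, Equiv.Perm.sign_swap hij] at hdet
    simp at hdet

/-- If both `σ_i` and `σ_j` are right descents of `w`, all positive roots in the span of
`α_i, α_j` are inversions. -/
theorem invNum_both {i j : I} (w : Mor C) (hi : lin w (Pi.single i 1) ≤ 0)
    (hj : lin w (Pi.single j 1) ≤ 0) (hij : i ≠ j) :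
    invNum {i, j} w = (C.roots w.src ∩ {α | ∃ m n : ℕ,
      α = (m : ℤ) • Pi.single j 1 + (n : ℤ) • Pi.single i 1}).ncard := by
  rw [invNum]
  congr 1
  ext α
  constructor
  · rintro ⟨h1, h2, h3, -⟩
    refine ⟨h1, (α j).toNat, (α i).toNat, ?_⟩
    rw [Int.toNat_of_nonneg (h2 j), Int.toNat_of_nonneg (h2 i)]
    funext k
    by_cases hki : k = i
    · subst hki; simp [hij]
    · by_cases hkj : k = j
      · subst hkj; simp [hki]
      · simpa [hki, hkj] using h3 k (by simp [hki, hkj])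
  · rintro ⟨h1, m, n, rfl⟩
    have h2 : (0 : I → ℤ) ≤ (m : ℤ) • Pi.single j 1 + (n : ℤ) • Pi.single i 1 :=
      add_nonneg (smul_nonneg (by positivity) (single_nonneg j))
        (smul_nonneg (by positivity) (single_nonneg i))
    refine ⟨h1, h2, ?_, ?_⟩
    · intro k hk
      have hk' : k ≠ i ∧ k ≠ j := by simpa using hk
      simp [hk'.1, hk'.2]
    · rw [map_add, map_smul, map_smul]
      exact add_nonpos (smul_nonpos_of_nonneg_of_nonpos (by positivity) hj)
        (smul_nonpos_of_nonneg_of_nonpos (by positivity) hi)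

/-- Both alternating descents from `w` along `i, j` end at the same morphism: they have the same
source by (R4), and the same linear map because they differ by a trivial morphism. -/
theorem alt_eq_alt (hC : C.IsFRS) {i j : I} (hij : i ≠ j) (w : Mor C) (n : ℕ)
    (hsrc : (fun x => C.ρ j (C.ρ i x))^[n] w.src = w.src)
    (h1 : invNum {i, j} (alt w i j n) = 0) (h2 : invNum {i, j} (alt w j i n) = 0) :
    alt w i j n = alt w j i n := by
  have hi : i ∈ ({i, j} : Set I) := by simp
  have hj : j ∈ ({i, j} : Set I) := by simp
  have hs := alt_src w w i j n hsrc.symm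
  obtain ⟨g, hg, hgt, hgc⟩ := coset_trans (coset_symm (alt_coset w hj hi n)) (alt_coset w hi hj n)
  have hl : ∀ v, lin (alt w i j n) v = lin (alt w j i n) (lin g v) := fun v => by
    rw [hgc, lin_comp hgt]
  have hpos : ∀ k ∈ ({i, j} : Set I), 0 ≤ lin g (Pi.single k 1) := fun k hk => by
    -- otherwise `-g α_k` is a nonnegative vector in the span, which `alt w j i n` keeps nonnegative
    refine (single_sign hC g k).resolve_right fun hn => ?_
    have h3 : 0 ≤ lin (alt w j i n) (-lin g (Pi.single k 1)) :=
      map_nonneg_of_single (fun l hl => nonneg_of_invNum_eq_zero hC h2 hl) (neg_nonneg.2 hn)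
        fun l hl => by rw [Pi.neg_apply, par_coord hg _ hl, single_supp hk l hl, neg_zero]
    rw [map_neg, ← hl] at h3
    exact root_not_both (lin_mem_roots _ (single_mem_roots _ k))
      (nonneg_of_invNum_eq_zero hC h1 hk) (neg_nonneg.1 h3)
  have hdet : LinearMap.det (lin g) = 1 := by
    have h3 : lin (alt w i j n) = lin (alt w j i n) ∘ₗ lin g := LinearMap.ext hl
    have h4 := congrArg LinearMap.det h3
    rw [LinearMap.det_comp, det_alt, det_alt] at h4
    have hne : (-1) ^ n * LinearMap.det (lin w) ≠ 0 := by
      refine mul_ne_zero (by simp) ?_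
      obtain ⟨w', _, _, _, hwl, _⟩ := exists_inv (par_univ w)
      have : lin w' ∘ₗ lin w = LinearMap.id := LinearMap.ext fun v => by
        simpa [lin_apply] using hwl v
      intro h0
      have h5 := congrArg LinearMap.det this
      rw [LinearMap.det_comp, h0, mul_zero, LinearMap.det_id] at h5
      exact zero_ne_one h5
    exact (mul_left_cancel₀ hne ((mul_one _).trans h4)).symm
  ext1
  · exact hs
  · rw [alt_tgt, alt_tgt]
  · funext v
    rw [← lin_apply, ← lin_apply, hl,
      rank_two_trivial hC hij hi hj (fun k hk => by simpa using hk) hg hpos hdet]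

open Relation in
/-- Local confluence of the descent relation; the case `i = j` is trivial. -/
theorem desc_confluent (hC : C.IsFRS) (w : Mor C) {i j : I} (hij : i ≠ j)
    (hi : lin w (Pi.single i 1) ≤ 0) (hj : lin w (Pi.single j 1) ≤ 0) :
    ∃ t, ReflTransGen Desc (st w i) t ∧ ReflTransGen Desc (st w j) t := by
  have hiJ : i ∈ ({i, j} : Set I) := by simp
  have hjJ : j ∈ ({i, j} : Set I) := by simp
  have e1 := invNum_st_neg hC w hiJ hi
  have e2 := invNum_st_neg hC w hjJ hj
  obtain ⟨n, hn⟩ : ∃ n, invNum {i, j} w = n + 1 := ⟨_, e1.symm⟩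
  have d1 := alt_desc hC n (st w i) hjJ hiJ (fun k hk => by simpa [or_comm] using hk)
    (by omega) (by rw [lin_st_single]; exact neg_nonneg.2 hi)
  have d2 := alt_desc hC n (st w j) hiJ hjJ (fun k hk => by simpa using hk)
    (by omega) (by rw [lin_st_single]; exact neg_nonneg.2 hj)
  have hsrc := hC.2.2.2 w.src j i hij.symm
  rw [← invNum_both w hi hj hij, hn] at hsrc
  have := alt_eq_alt hC hij w (n + 1) hsrc d1.2 d2.2
  simp only [alt] at this
  exact ⟨_, d1.1, this ▸ d2.1⟩

/-! ### Length equals the number of inversions -/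

theorem desc_invNum (hC : C.IsFRS) {x y : Mor C} (h : Desc x y) :
    invNum Set.univ y + 1 = invNum Set.univ x := by
  obtain ⟨i, hi, rfl⟩ := h
  exact invNum_st_neg hC x trivial hi

open Relation in
theorem exists_terminal (hC : C.IsFRS) (n : ℕ) (x : Mor C) (hn : invNum Set.univ x = n) :
    ∃ t, ReflTransGen Desc x t ∧ ∀ y, ¬ Desc t y := by
  induction n generalizing x with
  | zero => exact ⟨x, .refl, fun y hy => by have := desc_invNum hC hy; omega⟩
  | succ n ih =>
    by_cases h : ∃ y, Desc x y
    · obtain ⟨y, hy⟩ := h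
      obtain ⟨t, h1, h2⟩ := ih y (by have := desc_invNum hC hy; omega)
      exact ⟨t, .head hy h1, h2⟩
    · exact ⟨x, .refl, fun y hy => h ⟨y, hy⟩⟩

open Relation in
/-- Newman's lemma for the descent relation. -/
theorem terminal_unique (hC : C.IsFRS) (n : ℕ) (x t t' : Mor C) (hn : invNum Set.univ x = n)
    (h : ReflTransGen Desc x t) (h' : ReflTransGen Desc x t') (ht : ∀ y, ¬ Desc t y)
    (ht' : ∀ y, ¬ Desc t' y) : t = t' := by
  induction n generalizing x t t' with
  | zero =>
    rcases h.cases_head with rfl | ⟨y, hy, -⟩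
    · rcases h'.cases_head with rfl | ⟨y, hy, -⟩
      · rfl
      · exact (ht y hy).elim
    · have := desc_invNum hC hy; omega
  | succ n ih =>
    rcases h.cases_head with rfl | ⟨y, hy, hyt⟩
    · rcases h'.cases_head with rfl | ⟨y, hy, -⟩
      · rfl
      · exact (ht y hy).elim
    rcases h'.cases_head with rfl | ⟨z, hz, hzt⟩
    · exact (ht' y hy).elim
    have hyn := desc_invNum hC hy
    have hzn := desc_invNum hC hz
    obtain ⟨i, hi, rfl⟩ := hy
    obtain ⟨j, hj, rfl⟩ := hz
    by_cases hij : i = j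
    · subst hij
      exact ih _ _ _ (by omega) hyt hzt ht ht'
    · obtain ⟨s, hs1, hs2⟩ := desc_confluent hC x hij hi hj
      obtain ⟨r, hr, hrt⟩ := exists_terminal hC _ s rfl
      exact (ih _ _ _ (by omega) hyt (hs1.trans hr) ht hrt).trans
        (ih _ _ _ (by omega) (hs2.trans hr) hzt hrt ht')

theorem id_terminal (a : A) (y : Mor C) : ¬ Desc (idMor C a) y := by
  rintro ⟨i, hi, -⟩
  have := hi i
  simp [lin_id] at this

open Relation in
/-- Every morphism descends to an identity: `x` and `x σ_i` are related by a descent in one of the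
two directions, hence have the same terminal morphism. -/
theorem desc_to_id (hC : C.IsFRS) (x : Mor C) : ReflTransGen Desc x (idMor C x.tgt) := by
  induction x using mor_induction with
  | h0 a => exact .refl
  | h1 w i ih =>
    rw [st_tgt]
    rcases single_sign hC w i with h | h
    · refine .head ⟨i, ?_, (st_st w i).symm⟩ ih
      rw [lin_st_single]; exact neg_nonpos.2 h
    · obtain ⟨t, h1, h2⟩ := exists_terminal hC _ (st w i) rfl
      have := terminal_unique hC _ w _ _ rfl ih (.head ⟨i, h, rfl⟩ h1) (id_terminal _) h2
      rw [this]; exact h1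

/-- A morphism that makes no simple root negative is an identity. -/
theorem eq_id_of_nonneg (hC : C.IsFRS) {w : Mor C} (h : ∀ i, 0 ≤ lin w (Pi.single i 1)) :
    w = idMor C w.tgt := by
  rcases (desc_to_id hC w).cases_head with h1 | ⟨y, ⟨i, hi, -⟩, -⟩
  · exact h1
  · exact (root_not_both (lin_mem_roots w (single_mem_roots _ i)) (h i) hi).elim

theorem len_le {w : Mor C} {l : List I} (h : Realizes w l) : len w ≤ l.length :=
  Nat.sInf_le ⟨l, h, rfl⟩

theorem len_spec (w : Mor C) : ∃ l, Realizes w l ∧ l.length = len w :=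
  Nat.sInf_mem (s := {k | ∃ l : List I, Realizes w l ∧ l.length = k})
    (by obtain ⟨l, h⟩ := w.spec; exact ⟨l.length, l, h, rfl⟩)

theorem len_st_le (w : Mor C) (i : I) : len (st w i) ≤ len w + 1 := by
  obtain ⟨l, hl, h⟩ := len_spec w
  have : Realizes (st w i) (l ++ [i]) := by
    constructor
    · rw [st_src, st_tgt, C.wordTarget_append, ← hl.1]
      simp [wordTarget, C.ρ_invol]
    · rw [st_src, st_toFun, C.wordMap_append, ← hl.2]
      simp [wordTarget, wordMap, C.ρ_invol]
  simpa [h] using len_le this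

theorem invNum_id (J : Set I) (a : A) : invNum J (idMor C a) = 0 :=
  invNum_eq_zero fun i _ => by rw [lin_id]; exact single_nonneg i

theorem len_id (a : A) : len (idMor C a) = 0 :=
  Nat.le_zero.1 (len_le (l := []) ⟨rfl, rfl⟩)

theorem invNum_le_word (hC : C.IsFRS) (l : List I) (w : Mor C) (h : Realizes w l) :
    invNum Set.univ w ≤ l.length := by
  induction l using List.reverseRecOn generalizing w with
  | nil =>
    have : w = idMor C w.src := by
      ext1
      exacts [rfl, h.1.symm, h.2.symm]
    rw [this, invNum_id]; simp
  | append_singleton l i ih =>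
    have h1 : Realizes (st w i) l := by
      constructor
      · rw [st_src, st_tgt, ← h.1, C.wordTarget_append]; rfl
      · rw [st_src, st_toFun, ← h.2, C.wordMap_append]
        funext v
        have := sigma_sigma (C := C) (C.ρ i w.src) i v
        rw [C.ρ_invol] at this
        simp [wordTarget, wordMap, this]
    have h2 := ih _ h1
    rw [List.length_append, List.length_singleton]
    rcases single_sign hC w i with h3 | h3
    · have := invNum_st_pos hC w (J := Set.univ) trivial h3; omega
    · have := invNum_st_neg hC w (J := Set.univ) trivial h3; omega

/-- The length of a morphism is the number of positive roots it makes negative. -/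
theorem len_eq_invNum (hC : C.IsFRS) (w : Mor C) : len w = invNum Set.univ w := by
  refine le_antisymm ?_ ?_
  · obtain ⟨n, hn⟩ : ∃ n, invNum Set.univ w = n := ⟨_, rfl⟩
    induction n generalizing w with
    | zero =>
      rw [eq_id_of_nonneg hC (w := w) fun i => nonneg_of_invNum_eq_zero hC hn trivial, len_id]
      exact Nat.zero_le _
    | succ n ih =>
      have : ∃ i, lin w (Pi.single i 1) ≤ 0 := by
        by_contra! hcon
        have := invNum_eq_zero (J := Set.univ) (w := w) fun i _ =>
          (single_sign hC w i).resolve_right (hcon i)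
        omega
      obtain ⟨i, hi⟩ := this
      have h1 := invNum_st_neg hC w (J := Set.univ) trivial hi
      have h2 := ih (st w i) (by omega)
      have h3 := len_st_le (st w i) i
      rw [st_st] at h3
      omega
  · obtain ⟨l, hl, h⟩ := len_spec w
    rw [← h]
    exact invNum_le_word hC l w hl

theorem eq_id_of_len (hC : C.IsFRS) {w : Mor C} (h : len w = 0) : w = idMor C w.tgt :=
  eq_id_of_nonneg hC fun _ =>
    nonneg_of_invNum_eq_zero hC ((len_eq_invNum hC w).symm.trans h) trivial

/-! ### Parabolic decomposition -/

/-- `W^J` consists of the morphisms that keep the simple roots in `J` positive. -/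
theorem upper_iff_nonneg (hC : C.IsFRS) {J : Set I} {u : Mor C} :
    InUpperJ C J u ↔ ∀ j ∈ J, 0 ≤ lin u (Pi.single j 1) := by
  refine forall₂_congr fun j hj => ?_
  change len (st u j) = _ ↔ _
  rw [len_eq_invNum hC, len_eq_invNum hC]
  constructor
  · intro h
    refine (single_sign hC u j).resolve_right fun hn => ?_
    have := invNum_st_neg hC u (J := Set.univ) trivial hn
    omega
  · exact invNum_st_pos hC u trivial

/-- If `u ∈ W^J` and `v ∈ W_J`, the length of `uv` exceeds that of `u` by the number of
inversions of `v` supported in `J`. -/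
theorem len_comp_invNum (hC : C.IsFRS) {J : Set I} {u : Mor C}
    (hu : ∀ j ∈ J, 0 ≤ lin u (Pi.single j 1)) (n : ℕ) (v : Mor C) (hv : InParabolic J v)
    (ht : v.tgt = u.src) (hn : invNum J v = n) : len (u.comp v) = len u + n := by
  induction n generalizing v with
  | zero =>
    have : v = idMor C u.src := by
      rw [← ht]
      refine eq_id_of_nonneg hC fun i => ?_
      by_cases hi : i ∈ J
      exacts [nonneg_of_invNum_eq_zero hC hn hi, par_nonneg hC hv hi]
    rw [this, comp_id', add_zero]
  | succ n ih =>
    have : ∃ j ∈ J, lin v (Pi.single j 1) ≤ 0 := by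
      by_contra! hcon
      have := invNum_eq_zero (J := J) (w := v) fun i hi =>
        (single_sign hC v i).resolve_right (hcon i hi)
      omega
    obtain ⟨j, hj, hneg⟩ := this
    have h1 := invNum_st_neg hC v hj hneg
    have h2 := ih (st v j) (par_st hv hj) ((st_tgt v j).trans ht) (by omega)
    have h3 : u.comp (st v j) = st (u.comp v) j := by
      rw [st, st, comp_src ht, comp_assoc' ht rfl]
    have h4 : lin (u.comp v) (Pi.single j 1) ≤ 0 := by
      rw [lin_comp ht, ← neg_nonneg, ← map_neg]
      refine map_nonneg_of_single hu (neg_nonneg.2 hneg) fun k hk => ?_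
      rw [Pi.neg_apply, par_coord hv _ hk, single_supp hj k hk, neg_zero]
    have h5 := invNum_st_neg hC (u.comp v) (J := Set.univ) trivial h4
    rw [h3] at h2
    rw [len_eq_invNum hC] at h2 ⊢
    omega

theorem len_par (hC : C.IsFRS) {J : Set I} {v : Mor C} (hv : InParabolic J v) :
    len v = invNum J v := by
  have h := len_comp_invNum hC (J := J) (u := idMor C v.tgt)
    (fun j _ => by rw [lin_id]; exact single_nonneg j) _ v hv rfl rfl
  have h1 : (idMor C v.tgt).comp v = v := by
    have ht : v.tgt = (idMor C v.tgt).src := rfl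
    ext1
    · rw [comp_src ht]
    · rw [comp_tgt ht]; rfl
    · rw [comp_toFun ht]; rfl
  rwa [h1, len_id, zero_add] at h

theorem len_comp_upper (hC : C.IsFRS) {J : Set I} {u v : Mor C} (hu : InUpperJ C J u)
    (hv : InParabolic J v) (ht : v.tgt = u.src) : len (u.comp v) = len u + len v := by
  rw [len_par hC hv]
  exact len_comp_invNum hC ((upper_iff_nonneg hC).1 hu) _ v hv ht rfl

/-- `W^J` consists of the morphisms that are shortest in their left coset of `W_J`. -/
theorem upper_iff_min (hC : C.IsFRS) {J : Set I} (u : Mor C) :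
    InUpperJ C J u ↔ ∀ x ∈ leftCoset u J, len u ≤ len x := by
  constructor
  · rintro hu x ⟨v, hv, ht, rfl⟩
    rw [len_comp_upper hC hu hv ht]
    exact Nat.le_add_right _ _
  · intro h
    refine (upper_iff_nonneg hC).2 fun j hj => ?_
    refine (single_sign hC u j).resolve_right fun hn => ?_
    have h1 := h _ (coset_st u hj)
    have h2 := invNum_st_neg hC u (J := Set.univ) trivial hn
    rw [len_eq_invNum hC, len_eq_invNum hC] at h1
    omega

/-- A coset meets `W^J` in at most one morphism. -/
theorem upper_unique (hC : C.IsFRS) {J : Set I} {u u' : Mor C} (hu : InUpperJ C J u)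
    (hu' : InUpperJ C J u') (h : u' ∈ leftCoset u J) : u' = u := by
  have h1 := (upper_iff_min hC u').1 hu' u (coset_symm h)
  obtain ⟨v, hv, ht, rfl⟩ := h
  rw [len_comp_upper hC hu hv ht] at h1
  rw [eq_id_of_len hC (w := v) (by omega), ht, comp_id']

theorem exists_min (J : Set I) (w : Mor C) :
    ∃ u ∈ leftCoset w J, ∀ x ∈ leftCoset w J, len u ≤ len x := by
  obtain ⟨u, hu, h⟩ := (InvImage.wf (len (C := C)) Nat.lt_wfRel.wf).has_min (leftCoset w J)
    ⟨w, coset_refl w J⟩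
  exact ⟨u, hu, fun x hx => not_lt.1 (h x hx)⟩

theorem comp_left_cancel {u v v' : Mor C} (h : v.tgt = u.src) (h' : v'.tgt = u.src)
    (he : u.comp v = u.comp v') : v = v' := by
  ext1
  · rw [← comp_src h, he, comp_src h']
  · rw [h, h']
  · funext x
    have h1 := congrArg (fun m : Mor C => lin m x) he
    simp only [lin_comp h, lin_comp h'] at h1
    rw [← lin_apply, ← lin_apply]
    exact sub_eq_zero.1 (lin_injective u (by rw [map_sub, h1, sub_self]))

end CartanScheme

/-- Every `w` has a unique decomposition `w = uv` with `u ∈ W^J(C)`,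
`v ∈ W_J(C)`; moreover `ℓ(w) = ℓ(u) + ℓ(v)`; every left coset `w W_J(C)` has a unique
representative of minimal length, and the system of these representatives is `W^J(C)`. -/
theorem parabolic_decomposition (C : CartanScheme I A) (hC : C.IsFRS)
    (J : Set I) (w : Mor C) :
    (∃! p : Mor C × Mor C, InUpperJ C J p.1 ∧ InParabolic J p.2 ∧
      p.2.tgt = p.1.src ∧ w = p.1.comp p.2) ∧
    (∀ u v : Mor C, InUpperJ C J u → InParabolic J v → v.tgt = u.src →
      w = u.comp v → len w = len u + len v) ∧
    (∃! u : Mor C, u ∈ leftCoset w J ∧ ∀ x ∈ leftCoset w J, len u ≤ len x) ∧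
    (∀ u : Mor C, InUpperJ C J u ↔ ∀ x ∈ leftCoset u J, len u ≤ len x) := by
  -- cosets of the members of a coset coincide, so minimality in `w W_J` is membership in `W^J`
  have key : ∀ u, (u ∈ leftCoset w J ∧ ∀ x ∈ leftCoset w J, len u ≤ len x) ↔
      (u ∈ leftCoset w J ∧ InUpperJ C J u) := fun u => by
    refine and_congr_right fun hu => ?_
    rw [upper_iff_min hC]
    exact ⟨fun h x hx => h x (coset_trans hu hx),
      fun h x hx => h x (coset_trans (coset_symm hu) hx)⟩
  obtain ⟨u, hu⟩ := exists_min J w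
  have huJ := ((key u).1 hu).2
  refine ⟨?_, ?_, ⟨u, hu, fun u' hu' => ?_⟩, upper_iff_min hC⟩
  · obtain ⟨v, hv, ht, hw⟩ := coset_symm hu.1
    refine ⟨(u, v), ⟨huJ, hv, ht, hw⟩, ?_⟩
    rintro ⟨u', v'⟩ ⟨hu', hv', ht', hw'⟩
    dsimp only at hu' hv' ht' hw'
    have h1 : w ∈ leftCoset u' J := ⟨v', hv', ht', hw'⟩
    obtain rfl : u' = u := upper_unique hC huJ hu' (coset_trans (coset_symm hu.1) (coset_symm h1))
    obtain rfl : v' = v := comp_left_cancel ht' ht (hw'.symm.trans hw)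
    rfl
  · intro u₁ v hu₁ hv ht hw
    rw [hw]
    exact len_comp_upper hC hu₁ hv ht
  · exact upper_unique hC huJ ((key u').1 hu').2 (coset_trans (coset_symm hu.1) hu'.1)
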